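/- arXiv:2604.23723 — 2 statements merged into one kernel-verified Lean document; each statement's English description precedes it below -/
import Mathlib

section
/- Let a < b be real numbers and for each natural number j define the shifted Legendre polynomial p_j on [a,b] by p_j(s) = (-1)^j * Σ_{i=0}^{j} (-1)^i * C(j,i) * C(j+i,i) * ((s-a)/(b-a))^i, where C(·,·) denotes the binomial coefficient. Then the family {p_j} is orthogonal on [a,b]: for all natural numbers i ≠ j, ∫_a^b p_i(s) p_j(s) ds = 0, and for every j, ∫_a^b p_j(s)^2 ds = (b-a)/(2j+1). -/
/-- The shifted Legendre polynomial of degree `j` on the interval `[a, b]`: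
`p_j(s) = (-1)^j * Σ_{i=0}^{j} (-1)^i * C(j,i) * C(j+i,i) * ((s-a)/(b-a))^i`. -/
noncomputable def shiftedLegendre (a b : ℝ) (j : ℕ) (s : ℝ) : ℝ :=
  (-1 : ℝ) ^ j *
    ∑ i ∈ Finset.range (j + 1),
      (-1 : ℝ) ^ i * (j.choose i : ℝ) * ((j + i).choose i : ℝ) * ((s - a) / (b - a)) ^ i

/-!
After the substitution `x = (s - a) / (b - a)` everything takes place on `[0, 1]`. There Rodrigues'
formula `n! Pₙ = (d/dx)ⁿ (xⁿ (x - 1)ⁿ)` and `n` integrations by parts, whose boundary terms vanish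
because `0` and `1` are roots of order `n`, give `n! ∫ q Pₙ = ∫ q⁽ⁿ⁾ xⁿ (1 - x)ⁿ` for every
polynomial `q`. If `deg q ≤ n`, then `q⁽ⁿ⁾` is the constant `n! qₙ`, where `qₙ` is the coefficient
of `xⁿ`, and the Beta integral yields `∫ q Pₙ = qₙ n!² / (2n + 1)!`. Taking `q = Pₘ` with `m < n`
gives orthogonality, and `q = Pₙ`, with leading coefficient `C(2n, n)`, gives the norm.
-/

open Polynomial hiding shiftedLegendre
open scoped Nat Polynomial

section Derivatives

variable {R : Type*}

theorem isRoot_iterate_derivative_of_X_sub_C_pow_dvd [CommRing R] {p : R[X]} {r : R} {n k : ℕ}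
    (hp : (X - C r) ^ n ∣ p) (hk : k < n) : (derivative^[k] p).IsRoot r :=
  dvd_iff_isRoot.mp <| (dvd_pow_self _ (Nat.sub_ne_zero_of_lt hk)).trans
    (pow_sub_dvd_iterate_derivative_of_pow_dvd k hp)

theorem iterate_derivative_eq_C_of_natDegree_le [Semiring R] {p : R[X]} {n : ℕ}
    (hp : p.natDegree ≤ n) : derivative^[n] p = C (n ! * p.coeff n) := by
  have natDegree_le_zero : (derivative^[n] p).natDegree ≤ 0 :=
    (natDegree_iterate_derivative p n).trans (Nat.sub_eq_zero_of_le hp).le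
  rw [eq_C_of_natDegree_le_zero natDegree_le_zero, coeff_iterate_derivative, zero_add,
    Nat.descFactorial_self, nsmul_eq_mul]

end Derivatives

section Integrals

theorem integral_eval_mul_derivative (p q : ℝ[X]) (a b : ℝ) :
    ∫ x in a..b, (p * derivative q).eval x =
      p.eval b * q.eval b - p.eval a * q.eval a - ∫ x in a..b, (derivative p * q).eval x := by
  simp only [eval_mul]
  exact intervalIntegral.integral_mul_deriv_eq_deriv_mul
    (fun x _ ↦ p.hasDerivAt x) (fun x _ ↦ q.hasDerivAt x)
    ((derivative p).continuous.intervalIntegrable _ _)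
    ((derivative q).continuous.intervalIntegrable _ _)

theorem integral_eval_mul_iterate_derivative {w : ℝ[X]} {a b : ℝ} {n : ℕ}
    (ha : (X - C a) ^ n ∣ w) (hb : (X - C b) ^ n ∣ w) (q : ℝ[X]) :
    ∫ x in a..b, (q * derivative^[n] w).eval x =
      (-1) ^ n * ∫ x in a..b, (derivative^[n] q * w).eval x := by
  induction n generalizing q with
  | zero => simp
  | succ n ih =>
    have root_a : (derivative^[n] w).eval a = 0 :=
      isRoot_iterate_derivative_of_X_sub_C_pow_dvd ha n.lt_succ_self
    have root_b : (derivative^[n] w).eval b = 0 :=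
      isRoot_iterate_derivative_of_X_sub_C_pow_dvd hb n.lt_succ_self
    calc ∫ x in a..b, (q * derivative^[n + 1] w).eval x
        = -∫ x in a..b, (derivative q * derivative^[n] w).eval x := by
          rw [Function.iterate_succ_apply', integral_eval_mul_derivative, root_a, root_b]
          ring
      _ = (-1) ^ (n + 1) * ∫ x in a..b, (derivative^[n + 1] q * w).eval x := by
          rw [ih ((pow_dvd_pow _ n.le_succ).trans ha) ((pow_dvd_pow _ n.le_succ).trans hb),
            ← Function.iterate_succ_apply]
          ring

theorem integral_pow_mul_one_sub_pow (m n : ℕ) :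
    ∫ x in (0 : ℝ)..1, x ^ m * (1 - x) ^ n = (m ! * n ! : ℝ) / (m + n + 1)! := by
  have re_pos (k : ℕ) : 0 < ((k : ℂ) + 1).re := by
    rw [Complex.add_re, Complex.natCast_re, Complex.one_re]
    positivity
  have beta : Complex.betaIntegral (m + 1) (n + 1) = (m ! * n ! : ℂ) / (m + n + 1)! := by
    rw [Complex.betaIntegral_eq_Gamma_mul_div _ _ (re_pos m) (re_pos n),
      Complex.Gamma_nat_eq_factorial, Complex.Gamma_nat_eq_factorial,
      ← Complex.Gamma_nat_eq_factorial (m + n + 1)]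
    push_cast
    ring_nf
  simp only [Complex.betaIntegral, add_sub_cancel_right, Complex.cpow_natCast] at beta
  apply Complex.ofReal_injective
  rw [← intervalIntegral.integral_ofReal]
  push_cast
  exact beta

theorem integral_comp_sub_div_sub {E : Type*} [NormedAddCommGroup E] [NormedSpace ℝ E]
    {a b : ℝ} (hab : a ≠ b) (f : ℝ → E) :
    ∫ s in a..b, f ((s - a) / (b - a)) = (b - a) • ∫ x in (0 : ℝ)..1, f x := by
  have hba : b - a ≠ 0 := sub_ne_zero.mpr hab.symm
  simp only [sub_div]
  rw [intervalIntegral.integral_comp_div_sub f hba, sub_self, ← sub_div, div_self hba]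

end Integrals

/-- The shifted Legendre polynomial of degree `n` on `[0, 1]`, as a real polynomial. The sign
`(-1) ^ n` makes its leading coefficient positive, unlike that of `Polynomial.shiftedLegendre`. -/
noncomputable def unitLegendre (n : ℕ) : ℝ[X] :=
  (-1) ^ n * (Polynomial.shiftedLegendre n).map (Int.castRingHom ℝ)

theorem shiftedLegendre_eq_eval_unitLegendre (a b : ℝ) (n : ℕ) (s : ℝ) :
    shiftedLegendre a b n s = (unitLegendre n).eval ((s - a) / (b - a)) := by
  simp only [shiftedLegendre, ← Nat.choose_symm_add]
  simp [unitLegendre, Polynomial.shiftedLegendre, Polynomial.map_sum, eval_finsetSum]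

namespace unitLegendre

theorem coeff_eq (n k : ℕ) :
    (unitLegendre n).coeff k = (-1) ^ (n + k) * n.choose k * (n + k).choose n := by
  have sign_eq_C : ((-1) ^ n : ℝ[X]) = C ((-1) ^ n) := by simp
  rw [unitLegendre, sign_eq_C, coeff_C_mul, coeff_map, coeff_shiftedLegendre]
  simp [pow_add, mul_assoc]

theorem natDegree_le (n : ℕ) : (unitLegendre n).natDegree ≤ n :=
  natDegree_le_iff_coeff_eq_zero.mpr fun k hk ↦ by
    simp [coeff_eq, Nat.choose_eq_zero_of_lt hk]

theorem coeff_self (n : ℕ) : (unitLegendre n).coeff n = n.centralBinom := by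
  simp [coeff_eq, Nat.centralBinom, two_mul, (Even.add_self n).neg_one_pow]

theorem factorial_mul_eq_iterate_derivative (n : ℕ) :
    (n ! : ℝ[X]) * unitLegendre n = derivative^[n] (X ^ n * (X - 1) ^ n) := by
  have rodrigues : (n ! : ℝ[X]) * (Polynomial.shiftedLegendre n).map (Int.castRingHom ℝ) =
      derivative^[n] (X ^ n * (1 - X) ^ n) := by
    simpa [← iterate_derivative_map] using
      congrArg (Polynomial.map (Int.castRingHom ℝ)) (factorial_mul_shiftedLegendre_eq n)
  have sign_weight : (X ^ n * (X - 1) ^ n : ℝ[X]) = C ((-1) ^ n) * (X ^ n * (1 - X) ^ n) := by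
    rw [← neg_sub, neg_pow]
    simp only [map_pow, map_neg, map_one]
    ring
  rw [sign_weight, iterate_derivative_C_mul, ← rodrigues, unitLegendre]
  simp only [map_pow, map_neg, map_one]
  ring

theorem factorial_mul_integral_mul (q : ℝ[X]) (n : ℕ) :
    n ! * ∫ x in (0 : ℝ)..1, (q * unitLegendre n).eval x =
      ∫ x in (0 : ℝ)..1, (derivative^[n] q).eval x * (x ^ n * (1 - x) ^ n) := by
  have root_zero : (X - C 0) ^ n ∣ (X ^ n * (X - 1) ^ n : ℝ[X]) := by simp
  have root_one : (X - C 1) ^ n ∣ (X ^ n * (X - 1) ^ n : ℝ[X]) := by simp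
  calc n ! * ∫ x in (0 : ℝ)..1, (q * unitLegendre n).eval x
      = ∫ x in (0 : ℝ)..1, (q * derivative^[n] (X ^ n * (X - 1) ^ n)).eval x := by
        rw [← factorial_mul_eq_iterate_derivative, ← intervalIntegral.integral_const_mul]
        simp [mul_left_comm]
    _ = (-1) ^ n * ∫ x in (0 : ℝ)..1, (derivative^[n] q * (X ^ n * (X - 1) ^ n)).eval x :=
        integral_eval_mul_iterate_derivative root_zero root_one q
    _ = ∫ x in (0 : ℝ)..1, (derivative^[n] q).eval x * (x ^ n * (1 - x) ^ n) := by
        rw [← intervalIntegral.integral_const_mul]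
        refine intervalIntegral.integral_congr fun x _ ↦ ?_
        rw [← neg_sub x 1, neg_pow (x - 1)]
        simp only [eval_mul, eval_pow, eval_sub, eval_X, eval_one]
        ring

theorem integral_mul_of_natDegree_le {q : ℝ[X]} {n : ℕ} (hq : q.natDegree ≤ n) :
    ∫ x in (0 : ℝ)..1, (q * unitLegendre n).eval x =
      q.coeff n * ((n ! * n ! : ℝ) / (n + n + 1)!) := by
  have factorial_ne_zero : (n ! : ℝ) ≠ 0 := mod_cast n.factorial_ne_zero
  apply mul_left_cancel₀ factorial_ne_zero
  simp only [factorial_mul_integral_mul, iterate_derivative_eq_C_of_natDegree_le hq, eval_C,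
    intervalIntegral.integral_const_mul, integral_pow_mul_one_sub_pow, mul_assoc]

theorem integral_mul_of_lt {m n : ℕ} (hmn : m < n) :
    ∫ x in (0 : ℝ)..1, (unitLegendre m * unitLegendre n).eval x = 0 := by
  have natDegree_lt : (unitLegendre m).natDegree < n := (natDegree_le m).trans_lt hmn
  rw [integral_mul_of_natDegree_le natDegree_lt.le, coeff_eq_zero_of_natDegree_lt natDegree_lt,
    zero_mul]

theorem integral_mul_of_ne {m n : ℕ} (hmn : m ≠ n) :
    ∫ x in (0 : ℝ)..1, (unitLegendre m * unitLegendre n).eval x = 0 := by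
  rcases hmn.lt_or_gt with hlt | hgt
  · exact integral_mul_of_lt hlt
  · rw [mul_comm]
    exact integral_mul_of_lt hgt

theorem integral_mul_self (n : ℕ) :
    ∫ x in (0 : ℝ)..1, (unitLegendre n * unitLegendre n).eval x = 1 / (2 * n + 1) := by
  have centralBinom_mul : (n.centralBinom * (n ! * n !) : ℝ) = (n + n)! := by
    rw [Nat.centralBinom, two_mul, ← mul_assoc]
    exact_mod_cast Nat.add_choose_mul_factorial_mul_factorial n n
  have factorial_ne_zero : ((n + n)! : ℝ) ≠ 0 := mod_cast (n + n).factorial_ne_zero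
  rw [integral_mul_of_natDegree_le (natDegree_le n), coeff_self, ← mul_div_assoc,
    centralBinom_mul, Nat.factorial_succ]
  push_cast
  field_simp
  ring

end unitLegendre

theorem integral_shiftedLegendre_mul {a b : ℝ} (hab : a ≠ b) (i j : ℕ) :
    ∫ s in a..b, shiftedLegendre a b i s * shiftedLegendre a b j s =
      (b - a) * ∫ x in (0 : ℝ)..1, (unitLegendre i * unitLegendre j).eval x := by
  simp only [shiftedLegendre_eq_eval_unitLegendre, ← eval_mul]
  exact integral_comp_sub_div_sub hab fun x ↦ (unitLegendre i * unitLegendre j).eval x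

/-- The family of shifted Legendre polynomials is orthogonal on `[a, b]`:
for `i ≠ j` the integral of `p_i p_j` vanishes, and `∫_a^b p_j^2 = (b-a)/(2j+1)`. -/
theorem shiftedLegendre_orthogonal (a b : ℝ) (hab : a < b) :
    (∀ i j : ℕ, i ≠ j →
      ∫ s in a..b, shiftedLegendre a b i s * shiftedLegendre a b j s = 0) ∧
    (∀ j : ℕ,
      ∫ s in a..b, (shiftedLegendre a b j s) ^ 2 = (b - a) / (2 * (j : ℝ) + 1)) := by
  refine ⟨fun i j hij ↦ ?_, fun j ↦ ?_⟩
  · rw [integral_shiftedLegendre_mul hab.ne, unitLegendre.integral_mul_of_ne hij, mul_zero]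
  · simp only [sq]
    rw [integral_shiftedLegendre_mul hab.ne, unitLegendre.integral_mul_self, mul_one_div]
end

section
/- Let m ≥ 2, n ≥ 1, A ∈ ℝ^{n×n}, B ∈ ℝ^{n×r}, K ∈ ℝ^{r×n}, let L ∈ ℝ^{m×m} satisfy L·1_m = 0, let E_k ∈ ℝ^{m×m} be the matrix with a single 1 at entry (k,k) and zeros elsewhere, and let τ_1, …, τ_m : ℝ → ℝ be delay functions. Suppose x : ℝ → ℝ^{mn} is differentiable and satisfies ẋ(t) = (I_m ⊗ A) x(t) − Σ_{k=1}^m (E_k L ⊗ (BK)) x(t − τ_k(t)) for all t. Set G = [1_{m−1} | −I_{m−1}], U = [0_{m−1} | −I_{m−1}]ᵀ, and define the error state z(t) = (G ⊗ I_n) x(t) ∈ ℝ^{(m−1)n}. Then z is differentiable and satisfies ż(t) = (I_{m−1} ⊗ A) z(t) − Σ_{k=1}^m (G E_k L U ⊗ (BK)) z(t − τ_k(t)) for all t. -/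
open Matrix Kronecker

/-- The tree-type transformation matrix `G = [1_{m−1} | −I_{m−1}] ∈ ℝ^{(m−1)×m}`. -/
def treeG (m : ℕ) : Matrix (Fin (m - 1)) (Fin m) ℝ := fun i j =>
  if (j : ℕ) = 0 then 1 else if (j : ℕ) = (i : ℕ) + 1 then -1 else 0

/-- The matrix `U = [0_{m−1} | −I_{m−1}]ᵀ ∈ ℝ^{m×(m−1)}` (zero first row, `−I_{m−1}` below). -/
def treeU (m : ℕ) : Matrix (Fin m) (Fin (m - 1)) ℝ := fun i j =>
  if (i : ℕ) = (j : ℕ) + 1 then -1 else 0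

/-- `E_k ∈ ℝ^{m×m}`: a single `1` at entry `(k,k)`, zeros elsewhere. -/
def Ediag (m : ℕ) (k : Fin m) : Matrix (Fin m) (Fin m) ℝ := fun i j =>
  if i = k ∧ j = k then 1 else 0

/-!
Since `U G = I - 1 e₁ᵀ`, every matrix `M` with `M 1 = 0` satisfies `M U G = M`: it acts on the
agents' states only through their differences. Hence `(G ⊗ I) (M ⊗ C) = (G M U ⊗ C) (G ⊗ I)`, while
`(G ⊗ I) (I ⊗ A) = (I ⊗ A) (G ⊗ I)` always holds, and applying the constant matrix `G ⊗ I` to the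
dynamics of `x` gives a closed equation for `z = (G ⊗ I) x`.
-/

lemma treeU_mul_apply_zero {ι : Type*} {l : ℕ} (N : Matrix (Fin (l + 1 - 1)) ι ℝ) (j : ι) :
    (treeU (l + 1) * N) 0 j = 0 := by
  simp [mul_apply, treeU]

lemma treeU_mul_apply_succ {ι : Type*} {l : ℕ} (N : Matrix (Fin (l + 1 - 1)) ι ℝ) (i : Fin l)
    (j : ι) : (treeU (l + 1) * N) i.succ j = -N i j := by
  simp [mul_apply, treeU, ← Fin.ext_iff]

lemma treeU_mul_treeG (m : ℕ) :
    treeU m * treeG m = 1 - vecMulVec 1 (fun j : Fin m => if (j : ℕ) = 0 then 1 else 0) := by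
  cases m with
  | zero => exact Subsingleton.elim _ _
  | succ l =>
    ext i j
    cases i using Fin.cases with
    | zero =>
      rw [treeU_mul_apply_zero]
      cases j using Fin.cases <;> simp [one_apply, (Fin.succ_ne_zero _).symm]
    | succ i =>
      rw [treeU_mul_apply_succ]
      cases j using Fin.cases with
      | zero => simp [treeG]
      | succ j => by_cases hij : i = j <;>
        simp [treeG, one_apply, ← Fin.ext_iff, hij, eq_comm (a := j)]

lemma mul_treeU_mul_treeG_of_mulVec_one_eq_zero {ι : Type*} {m : ℕ} {M : Matrix ι (Fin m) ℝ}
    (hM : M *ᵥ 1 = 0) : M * treeU m * treeG m = M := by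
  rw [Matrix.mul_assoc, treeU_mul_treeG, Matrix.mul_sub, Matrix.mul_one, mul_vecMulVec, hM,
    zero_vecMulVec, sub_zero]

section Kronecker

variable {R ι κ ν : Type*} [CommSemiring R] [Fintype ι] [Fintype κ] [Fintype ν] [DecidableEq ν]

lemma kronecker_one_mulVec_one_kronecker_mulVec [DecidableEq ι] [DecidableEq κ]
    (G : Matrix κ ι R) (A : Matrix ν ν R) (v : ι × ν → R) :
    (G ⊗ₖ (1 : Matrix ν ν R)) *ᵥ (((1 : Matrix ι ι R) ⊗ₖ A) *ᵥ v) =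
      ((1 : Matrix κ κ R) ⊗ₖ A) *ᵥ ((G ⊗ₖ (1 : Matrix ν ν R)) *ᵥ v) := by
  simp only [mulVec_mulVec, ← mul_kronecker_mul, Matrix.one_mul, Matrix.mul_one]

lemma kronecker_one_mulVec_kronecker_mulVec_of_mul_mul_eq {G : Matrix κ ι R} {U : Matrix ι κ R}
    {M : Matrix ι ι R} (hM : M * U * G = M) (C : Matrix ν ν R) (v : ι × ν → R) :
    (G ⊗ₖ (1 : Matrix ν ν R)) *ᵥ ((M ⊗ₖ C) *ᵥ v) =
      ((G * M * U) ⊗ₖ C) *ᵥ ((G ⊗ₖ (1 : Matrix ν ν R)) *ᵥ v) := by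
  have hGM : G * M * U * G = G * M := by rw [Matrix.mul_assoc G, Matrix.mul_assoc G, hM]
  simp only [mulVec_mulVec, ← mul_kronecker_mul, Matrix.one_mul, Matrix.mul_one, hGM]

end Kronecker

lemma hasDerivAt_const_mulVec {𝕜 ι κ : Type*} [NontriviallyNormedField 𝕜] [Fintype ι]
    (M : Matrix κ ι 𝕜) {x : 𝕜 → ι → 𝕜} {x' : ι → 𝕜} {t : 𝕜} (hx : HasDerivAt x x' t) :
    HasDerivAt (fun s => M *ᵥ x s) (M *ᵥ x') t :=
  hasDerivAt_pi.2 fun i => .fun_sum fun j _ => (hasDerivAt_pi.1 hx j).const_mul (M i j)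

theorem error_state_dynamics_general {m : ℕ} {ν κ : Type*} [Fintype ν] [DecidableEq ν] [Fintype κ]
    (A : Matrix ν ν ℝ) (C : κ → Matrix ν ν ℝ) (M : κ → Matrix (Fin m) (Fin m) ℝ)
    (hM : ∀ k, M k *ᵥ 1 = 0) (τ : κ → ℝ → ℝ) (x : ℝ → Fin m × ν → ℝ) (t : ℝ)
    (hx : HasDerivAt x
      (((1 : Matrix (Fin m) (Fin m) ℝ) ⊗ₖ A) *ᵥ x t
        - ∑ k, (M k ⊗ₖ C k) *ᵥ x (t - τ k t)) t) :
    HasDerivAt (fun s => (treeG m ⊗ₖ (1 : Matrix ν ν ℝ)) *ᵥ x s)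
      (((1 : Matrix (Fin (m - 1)) (Fin (m - 1)) ℝ) ⊗ₖ A) *ᵥ
          ((treeG m ⊗ₖ (1 : Matrix ν ν ℝ)) *ᵥ x t)
        - ∑ k, ((treeG m * M k * treeU m) ⊗ₖ C k) *ᵥ
            ((treeG m ⊗ₖ (1 : Matrix ν ν ℝ)) *ᵥ x (t - τ k t))) t := by
  refine (hasDerivAt_const_mulVec _ hx).congr_deriv ?_
  rw [mulVec_sub, mulVec_sum, kronecker_one_mulVec_one_kronecker_mulVec]
  congr! 2 with k
  exact kronecker_one_mulVec_kronecker_mulVec_of_mul_mul_eq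
    (mul_treeU_mul_treeG_of_mulVec_one_eq_zero (hM k)) _ _

/-- Tree-type transformation of the delayed multi-agent dynamics: if
`ẋ(t) = (I_m ⊗ A)x(t) − Σ_k (E_k L ⊗ BK) x(t−τ_k(t))` and `L·1_m = 0`, then the error
state `z(t) = (G ⊗ I_n)x(t)` satisfies
`ż(t) = (I_{m−1} ⊗ A) z(t) − Σ_k (G E_k L U ⊗ BK) z(t−τ_k(t))`. -/
theorem error_state_dynamics (m n r : ℕ) (hm : 2 ≤ m) (hn : 1 ≤ n)
    (A : Matrix (Fin n) (Fin n) ℝ) (B : Matrix (Fin n) (Fin r) ℝ)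
    (K : Matrix (Fin r) (Fin n) ℝ)
    (L : Matrix (Fin m) (Fin m) ℝ) (hL : L.mulVec (fun _ => 1) = 0)
    (τ : Fin m → ℝ → ℝ)
    (x : ℝ → Fin m × Fin n → ℝ)
    (hx : ∀ t : ℝ, HasDerivAt x
      (((1 : Matrix (Fin m) (Fin m) ℝ) ⊗ₖ A).mulVec (x t)
        - ∑ k : Fin m, ((Ediag m k * L) ⊗ₖ (B * K)).mulVec (x (t - τ k t))) t) :
    ∀ t : ℝ, HasDerivAt (fun t => (treeG m ⊗ₖ (1 : Matrix (Fin n) (Fin n) ℝ)).mulVec (x t))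
      (((1 : Matrix (Fin (m - 1)) (Fin (m - 1)) ℝ) ⊗ₖ A).mulVec
          ((treeG m ⊗ₖ (1 : Matrix (Fin n) (Fin n) ℝ)).mulVec (x t))
        - ∑ k : Fin m, ((treeG m * Ediag m k * L * treeU m) ⊗ₖ (B * K)).mulVec
            ((treeG m ⊗ₖ (1 : Matrix (Fin n) (Fin n) ℝ)).mulVec (x (t - τ k t)))) t := by
  have hEL (k : Fin m) : (Ediag m k * L) *ᵥ 1 = 0 :=
    (mulVec_mulVec ..).symm.trans ((congrArg _ hL).trans (mulVec_zero _))
  simpa only [Matrix.mul_assoc] using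
    fun t => error_state_dynamics_general A (fun _ => B * K) _ hEL τ x t (hx t)
end
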